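/- (Complete-case conditional contrast.) Fix d in {(1,1),(0,1),(1,0)} and d' = (0,0), with P(D = d | X) > 0 and P(D = d' | X) > 0 a.s., P(D = d, S = 1) > 0 and P(D = d', S = 1) > 0. Suppose Assumption DID holds for d and for d', and Assumption MAR holds. Then E[ΔY | D = d, S = 1, X] − E[ΔY | D = d', S = 1, X] = E[Y2(d) − Y2(d') | D = d, X] a.s. -/

import Mathlib

open MeasureTheory Set
open scoped Classical

noncomputable section

namespace DIDMissing

variable {Ω : Type*} {𝓧 : Type*}

/-- Real-valued indicator of a set. -/
def ind (A : Set Ω) : Ω → ℝ := A.indicator fun _ => (1 : ℝ)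

/-- All treatment paths `{0,1}²` (coded as reals). -/
def allPaths : Set (ℝ × ℝ) := {(0, 0), (0, 1), (1, 0), (1, 1)}

/-- The three treated paths `{(1,1), (0,1), (1,0)}`. -/
def threePaths : Set (ℝ × ℝ) := {(1, 1), (0, 1), (1, 0)}

/-- The event `{D = d}` for a treatment path `d = (d₁, d₂)`. -/
def evD (D1 D2 : Ω → ℝ) (d : ℝ × ℝ) : Set Ω := {ω | D1 ω = d.1 ∧ D2 ω = d.2}

/-- The event `{D₂ = b}`. -/
def evD2 (D2 : Ω → ℝ) (b : ℝ) : Set Ω := {ω | D2 ω = b}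

/-- `g` is a (measurable-in-the-covariate) version of the conditional mean `E[Z ∣ A, X]`:
for every bounded measurable `h`, `E[1_A · Z · h(X)] = E[1_A · g(X) · h(X)]`. -/
def IsCondMeanGiven [MeasurableSpace Ω] [MeasurableSpace 𝓧] (P : Measure Ω) (X : Ω → 𝓧)
    (A : Set Ω) (Z : Ω → ℝ) (g : 𝓧 → ℝ) : Prop :=
  Measurable g ∧
    ∀ h : 𝓧 → ℝ, Measurable h → (∃ C, ∀ x, |h x| ≤ C) →
      ∫ ω, ind A ω * Z ω * h (X ω) ∂P = ∫ ω, ind A ω * g (X ω) * h (X ω) ∂P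

/-- Assumption DID for a path `d` relative to `d' = (0,0)`:
(i) no anticipation, `E[Y₀(d) ∣ D = d, X] = E[Y₀(0,0) ∣ D = d, X]` a.s., stated in the
version-free integral form; and (ii) conditional parallel trends, stated as the existence
of a common version of `E[Y₂(0,0) − Y₀(0,0) ∣ X]` and `E[Y₂(0,0) − Y₀(0,0) ∣ D = d, X]`. -/
def DID [MeasurableSpace Ω] [MeasurableSpace 𝓧] (P : Measure Ω) (X : Ω → 𝓧)
    (D1 D2 : Ω → ℝ) (Y0p Y2p : ℝ × ℝ → Ω → ℝ) (d : ℝ × ℝ) : Prop :=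
  (∀ h : 𝓧 → ℝ, Measurable h → (∃ C, ∀ x, |h x| ≤ C) →
      ∫ ω, ind (evD D1 D2 d) ω * Y0p d ω * h (X ω) ∂P
        = ∫ ω, ind (evD D1 D2 d) ω * Y0p (0, 0) ω * h (X ω) ∂P) ∧
  (∃ tr : 𝓧 → ℝ,
      IsCondMeanGiven P X Set.univ (fun ω => Y2p (0, 0) ω - Y0p (0, 0) ω) tr ∧
      IsCondMeanGiven P X (evD D1 D2 d) (fun ω => Y2p (0, 0) ω - Y0p (0, 0) ω) tr)

/-- Assumption MAR: `S ⟂ (D₁, ΔY) ∣ (D₂, X)`, where `q d₂` is a version of the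
missing-data probability `P(S = 1 ∣ D₂ = d₂, X)`, which is `(0,1]`-valued a.s. -/
def MAR [MeasurableSpace Ω] [MeasurableSpace 𝓧] (P : Measure Ω) (X : Ω → 𝓧)
    (D1 D2 S Y0 Y2 : Ω → ℝ) (q : ℝ → 𝓧 → ℝ) : Prop :=
  (∀ d2 ∈ ({0, 1} : Set ℝ), IsCondMeanGiven P X (evD2 D2 d2) S (q d2)) ∧
  (∀ d2 ∈ ({0, 1} : Set ℝ), ∀ᵐ ω ∂P, 0 < q d2 (X ω) ∧ q d2 (X ω) ≤ 1) ∧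
  (∀ d2 ∈ ({0, 1} : Set ℝ), ∀ f : ℝ × ℝ → ℝ, Measurable f → (∃ C, ∀ p, |f p| ≤ C) →
      ∀ h : 𝓧 → ℝ, Measurable h → (∃ C, ∀ x, |h x| ≤ C) →
        ∫ ω, ind (evD2 D2 d2) ω * S ω * f (D1 ω, Y2 ω - Y0 ω) * h (X ω) ∂P
          = ∫ ω, ind (evD2 D2 d2) ω * q d2 (X ω) * f (D1 ω, Y2 ω - Y0 ω) * h (X ω) ∂P)

/-- The path-dependent ATT `τ_{d,(0,0)} = E[Y₂(d) − Y₂(0,0) ∣ D = d]`. -/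
def tau [MeasurableSpace Ω] (P : Measure Ω) (D1 D2 : Ω → ℝ)
    (Y2p : ℝ × ℝ → Ω → ℝ) (d : ℝ × ℝ) : ℝ :=
  (P (evD D1 D2 d)).toReal⁻¹ * ∫ ω in evD D1 D2 d, (Y2p d ω - Y2p (0, 0) ω) ∂P

/-!
Conditional means given an event `A` and `X` are conditional expectations given `σ(X)` under
`P.restrict A`. Missingness at random says that the law of `(X, ΔY)` on the complete cases
`{D = d, S = 1}` is its law on `{D = d}` reweighted by `q_{d₂}(X)`, and reweighting by a positive
function of `X` does not change a conditional expectation given `X`: hence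
`E[ΔY ∣ D = d, S = 1, X] = E[ΔY ∣ D = d, X]`. By no anticipation and parallel trends the right-hand
side is the treatment effect on path `d` plus the untreated trend `E[Y₂(0,0) − Y₀(0,0) ∣ X]`, which
is the same for both paths and cancels. Overlap, `P(D = d ∣ X) > 0`, makes each of these identities
between functions of `X`, known a.s. on `{D = d}`, hold a.s. everywhere.
-/

section ConditionalExpectation

open ProbabilityTheory
open scoped NNReal

variable {E : Type*} [NormedAddCommGroup E] [NormedSpace ℝ E] [CompleteSpace E]
  {m m₀ : MeasurableSpace Ω} {μ : Measure Ω}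

lemma ae_eq_condExp_of_forall_setIntegral_eq_of_bounded [IsFiniteMeasure μ] (hm : m ≤ m₀)
    {f g : Ω → E} (hf : Integrable f μ) (hg : StronglyMeasurable[m] g)
    (hfg : ∀ s, MeasurableSet[m] s → (∃ C, ∀ ω ∈ s, ‖g ω‖ ≤ C) →
      ∫ ω in s, g ω ∂μ = ∫ ω in s, f ω ∂μ) :
    g =ᵐ[μ] μ[f | m] := by
  let s : ℕ → Set Ω := fun n => {ω | ‖g ω‖ ≤ n}
  have hs (n : ℕ) : MeasurableSet[m] (s n) :=
    hg.norm.measurableSet_le stronglyMeasurable_const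
  have hg_on (n : ℕ) : IntegrableOn g (s n) μ :=
    Measure.integrableOn_of_bounded (M := n) (measure_ne_top _ _)
      (hg.mono hm).aestronglyMeasurable (ae_restrict_of_forall_mem (hm _ (hs n)) fun _ h => h)
  have h_ind (n : ℕ) : (s n).indicator g =ᵐ[μ] (s n).indicator (μ[f | m]) := by
    refine .trans ?_ (condExp_indicator hf (hs n))
    refine ae_eq_condExp_of_forall_setIntegral_eq hm (hf.indicator (hm _ (hs n)))
      (fun t _ _ => ((integrable_indicator_iff (hm _ (hs n))).2 (hg_on n)).integrableOn)
      (fun t ht _ => ?_) (hg.indicator (hs n)).aestronglyMeasurable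
    rw [setIntegral_indicator (hm _ (hs n)), setIntegral_indicator (hm _ (hs n))]
    exact hfg _ (ht.inter (hs n)) ⟨n, fun _ h => h.2⟩
  filter_upwards [ae_all_iff.2 h_ind] with ω hω
  obtain ⟨n, hn⟩ := exists_nat_ge ‖g ω‖
  have hmem : ω ∈ s n := hn
  simpa only [indicator_of_mem hmem] using hω n

lemma condExp_ae_eq_condExp_of_forall_setIntegral_eq [IsFiniteMeasure μ] (hm : m ≤ m₀)
    {f g : Ω → E} (hf : Integrable f μ) (hg : Integrable g μ)
    (hfg : ∀ s, MeasurableSet[m] s → ∫ ω in s, f ω ∂μ = ∫ ω in s, g ω ∂μ) :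
    μ[f | m] =ᵐ[μ] μ[g | m] :=
  ae_eq_condExp_of_forall_setIntegral_eq hm hg (fun _ _ _ => integrable_condExp.integrableOn)
    (fun s hs _ => (setIntegral_condExp hm hf hs).trans (hfg s hs))
    stronglyMeasurable_condExp.aestronglyMeasurable

lemma condExp_withDensity_ae_eq (hm : m ≤ m₀) {w : Ω → ℝ≥0} (hw : Measurable[m] w)
    [IsFiniteMeasure μ] [IsFiniteMeasure (μ.withDensity fun ω => w ω)] {f : Ω → E}
    (hf : Integrable f μ) (hfw : Integrable f (μ.withDensity fun ω => w ω)) :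
    (μ.withDensity fun ω => w ω)[f | m] =ᵐ[μ.withDensity fun ω => w ω] μ[f | m] := by
  have hw₀ : Measurable w := hw.mono hm le_rfl
  have hwf : Integrable (fun ω => w ω • f ω) μ :=
    (integrable_withDensity_iff_integrable_smul hw₀).1 hfw
  have pull_out : μ[fun ω => w ω • f ω | m] =ᵐ[μ] fun ω => w ω • μ[f | m] ω :=
    condExp_smul_of_aestronglyMeasurable_left
      hw.coe_nnreal_real.stronglyMeasurable.aestronglyMeasurable hwf hf
  have h_int : Integrable (μ[f | m]) (μ.withDensity fun ω => w ω) :=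
    (integrable_withDensity_iff_integrable_smul hw₀).2 (integrable_condExp.congr pull_out)
  refine (ae_eq_condExp_of_forall_setIntegral_eq hm hfw (fun _ _ _ => h_int.integrableOn)
    (fun s hs _ => ?_) stronglyMeasurable_condExp.aestronglyMeasurable).symm
  calc ∫ ω in s, μ[f | m] ω ∂(μ.withDensity fun ω => w ω)
      = ∫ ω in s, w ω • μ[f | m] ω ∂μ :=
        setIntegral_withDensity_eq_setIntegral_smul hw₀ _ (hm s hs)
    _ = ∫ ω in s, μ[fun ω => w ω • f ω | m] ω ∂μ :=
        integral_congr_ae (ae_restrict_of_ae pull_out.symm)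
    _ = ∫ ω in s, w ω • f ω ∂μ := setIntegral_condExp hm hwf hs
    _ = ∫ ω in s, f ω ∂(μ.withDensity fun ω => w ω) :=
        (setIntegral_withDensity_eq_setIntegral_smul hw₀ _ (hm s hs)).symm

lemma ae_of_ae_restrict_of_condExp_pos [IsFiniteMeasure μ] {A : Set Ω} (hA : MeasurableSet A)
    (hpos : ∀ᵐ ω ∂μ, 0 < (μ⟦A | m⟧) ω) {p : Ω → Prop}
    (hp : MeasurableSet[m] {ω | p ω}) (h : ∀ᵐ ω ∂μ.restrict A, p ω) : ∀ᵐ ω ∂μ, p ω := by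
  have h_zero : {ω | p ω}ᶜ.indicator (A.indicator fun _ => (1 : ℝ)) =ᵐ[μ] 0 := by
    filter_upwards [(ae_restrict_iff' hA).1 h] with ω hω
    by_cases hωA : ω ∈ A <;> simp [hωA, hω]
  have h_condExp : {ω | p ω}ᶜ.indicator (μ⟦A | m⟧) =ᵐ[μ] 0 :=
    (condExp_indicator ((integrable_const 1).indicator hA) hp.compl).symm.trans
      ((condExp_congr_ae h_zero).trans condExp_zero.eventuallyEq)
  filter_upwards [hpos, h_condExp] with ω hω h0
  by_contra hpω
  rw [indicator_of_mem hpω] at h0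
  exact hω.ne' h0

variable {Ω' : Type*} {m₀' : MeasurableSpace Ω'} {ν : Measure Ω'} [m𝓧 : MeasurableSpace 𝓧]
  [MeasurableSpace E] [BorelSpace E] [SecondCountableTopology E]

lemma comp_ae_eq_condExp_of_identDistrib [IsFiniteMeasure μ] [IsFiniteMeasure ν]
    {X : Ω → 𝓧} {X' : Ω' → 𝓧} {Y : Ω → E} {Y' : Ω' → E} (hX : Measurable X) (hX' : Measurable X')
    (hXY : IdentDistrib (fun ω => (X ω, Y ω)) (fun ω => (X' ω, Y' ω)) μ ν)
    (hY : Integrable Y μ) {g : 𝓧 → E} (hg : Measurable g)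
    (h : (fun ω => g (X ω)) =ᵐ[μ] μ[Y | m𝓧.comap X]) :
    (fun ω => g (X' ω)) =ᵐ[ν] ν[Y' | m𝓧.comap X'] := by
  have hY' : Integrable Y' ν := (hXY.comp measurable_snd).integrable_iff.1 hY
  have hgX : Integrable (fun ω => g (X ω)) μ := integrable_condExp.congr h.symm
  have hgX' : Integrable (fun ω => g (X' ω)) ν :=
    (hXY.comp (hg.comp measurable_fst)).integrable_iff.1 hgX
  have transfer (B : Set 𝓧) (hB : MeasurableSet B) {F : 𝓧 × E → E} (hF : Measurable F) :
      ∫ ω in X ⁻¹' B, F (X ω, Y ω) ∂μ = ∫ ω in X' ⁻¹' B, F (X' ω, Y' ω) ∂ν := by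
    rw [← integral_indicator (hX hB), ← integral_indicator (hX' hB)]
    exact (hXY.comp (hF.indicator (measurable_fst hB))).integral_eq
  refine ae_eq_condExp_of_forall_setIntegral_eq hX'.comap_le hY'
    (fun _ _ _ => hgX'.integrableOn) ?_
    (hg.comp (comap_measurable X')).stronglyMeasurable.aestronglyMeasurable
  rintro _ ⟨B, hB, rfl⟩ -
  calc ∫ ω in X' ⁻¹' B, g (X' ω) ∂ν
      = ∫ ω in X ⁻¹' B, g (X ω) ∂μ := (transfer B hB (hg.comp measurable_fst)).symm
    _ = ∫ ω in X ⁻¹' B, μ[Y | m𝓧.comap X] ω ∂μ := integral_congr_ae (ae_restrict_of_ae h)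
    _ = ∫ ω in X ⁻¹' B, Y ω ∂μ := setIntegral_condExp hX.comap_le hY ⟨B, hB, rfl⟩
    _ = ∫ ω in X' ⁻¹' B, Y' ω ∂ν := transfer B hB measurable_snd

end ConditionalExpectation

section Covariates

lemma abs_ind_le_one (A : Set Ω) (ω : Ω) : |ind A ω| ≤ 1 := by
  by_cases h : ω ∈ A <;> simp [ind, h]

lemma measurable_ind [MeasurableSpace Ω] {A : Set Ω} (hA : MeasurableSet A) :
    Measurable (ind A) :=
  measurable_const.indicator hA

variable [MeasurableSpace Ω] [m𝓧 : MeasurableSpace 𝓧] {P : Measure Ω} {X : Ω → 𝓧}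
  {A : Set Ω} {Z : Ω → ℝ} {g : 𝓧 → ℝ}

lemma integral_ind_mul_mul_ind_comp (hX : Measurable X) (hA : MeasurableSet A) (Z : Ω → ℝ)
    {B : Set 𝓧} (hB : MeasurableSet B) :
    ∫ ω, ind A ω * Z ω * ind B (X ω) ∂P = ∫ ω in X ⁻¹' B, Z ω ∂(P.restrict A) := by
  rw [Measure.restrict_restrict (hX hB), ← integral_indicator ((hX hB).inter hA)]
  congr with ω
  by_cases hωA : ω ∈ A <;> by_cases hωB : X ω ∈ B <;> simp [ind, hωA, hωB]

lemma IsCondMeanGiven.setIntegral_preimage_eq (hg : IsCondMeanGiven P X A Z g)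
    (hX : Measurable X) (hA : MeasurableSet A) {B : Set 𝓧} (hB : MeasurableSet B) :
    ∫ ω in X ⁻¹' B, g (X ω) ∂(P.restrict A) = ∫ ω in X ⁻¹' B, Z ω ∂(P.restrict A) := by
  rw [← integral_ind_mul_mul_ind_comp hX hA _ hB, ← integral_ind_mul_mul_ind_comp hX hA _ hB]
  exact (hg.2 (ind B) (measurable_ind hB) ⟨1, abs_ind_le_one B⟩).symm

lemma IsCondMeanGiven.ae_eq_condExp [IsFiniteMeasure P] (hg : IsCondMeanGiven P X A Z g)
    (hX : Measurable X) (hA : MeasurableSet A) (hZ : IntegrableOn Z A P) :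
    (fun ω => g (X ω)) =ᵐ[P.restrict A] (P.restrict A)[Z | m𝓧.comap X] := by
  refine ae_eq_condExp_of_forall_setIntegral_eq_of_bounded hX.comap_le hZ
    (hg.1.comp (comap_measurable X)).stronglyMeasurable ?_
  rintro _ ⟨B, hB, rfl⟩ -
  exact hg.setIntegral_preimage_eq hX hA hB

lemma IsCondMeanGiven.ae_eq_condExp_of_univ [IsFiniteMeasure P]
    (hg : IsCondMeanGiven P X univ Z g) (hX : Measurable X) (hZ : Integrable Z P) :
    (fun ω => g (X ω)) =ᵐ[P] P[Z | m𝓧.comap X] := by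
  simpa only [Measure.restrict_univ] using hg.ae_eq_condExp hX .univ hZ.integrableOn

end Covariates

section MissingTreatment

open ProbabilityTheory
open scoped ENNReal

variable [MeasurableSpace Ω] [m𝓧 : MeasurableSpace 𝓧] {P : Measure Ω}
  {X : Ω → 𝓧} {D1 D2 S Y0 Y2 : Ω → ℝ} {Y0p Y2p : ℝ × ℝ → Ω → ℝ} {d : ℝ × ℝ}
  {q : ℝ → 𝓧 → ℝ}

lemma measurableSet_evD (hD1 : Measurable D1) (hD2 : Measurable D2) (d : ℝ × ℝ) :
    MeasurableSet (evD D1 D2 d) :=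
  (hD1 (measurableSet_singleton d.1)).inter (hD2 (measurableSet_singleton d.2))

lemma MAR.measureReal_preimage_inter (hMAR : MAR P X D1 D2 S Y0 Y2 q) (hX : Measurable X)
    (hD1 : Measurable D1) (hD2 : Measurable D2) (hS : Measurable S)
    (hSv : ∀ ω, S ω = 0 ∨ S ω = 1) (hY : Measurable fun ω => Y2 ω - Y0 ω)
    (hd : d.2 ∈ ({0, 1} : Set ℝ)) {B : Set 𝓧} {C : Set ℝ}
    (hB : MeasurableSet B) (hC : MeasurableSet C) :
    (P.restrict (evD D1 D2 d ∩ {ω | S ω = 1})).real (X ⁻¹' B ∩ (fun ω => Y2 ω - Y0 ω) ⁻¹' C)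
      = ∫ ω in X ⁻¹' B ∩ (fun ω => Y2 ω - Y0 ω) ⁻¹' C, q d.2 (X ω)
          ∂(P.restrict (evD D1 D2 d)) := by
  have hA := measurableSet_evD hD1 hD2 d
  have hS1 : MeasurableSet {ω | S ω = 1} := hS (measurableSet_singleton 1)
  have hT := (hX hB).inter (hY hC)
  rw [measureReal_restrict_apply hT, ← integral_indicator_one (hT.inter (hA.inter hS1)),
    Measure.restrict_restrict hT, ← integral_indicator (hT.inter hA)]
  have factor (W : Ω → ℝ) (ω : Ω) :
      (X ⁻¹' B ∩ (fun ω => Y2 ω - Y0 ω) ⁻¹' C ∩ evD D1 D2 d).indicator W ω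
        = ind (evD2 D2 d.2) ω * W ω * ind ({d.1} ×ˢ C) (D1 ω, Y2 ω - Y0 ω) * ind B (X ω) := by
    simp only [ind, evD, evD2, indicator_apply, mem_inter_iff, mem_preimage, mem_ofPred_eq,
      mem_prod, mem_singleton_iff]
    split_ifs <;> simp_all
  have observed :
      (X ⁻¹' B ∩ (fun ω => Y2 ω - Y0 ω) ⁻¹' C ∩ (evD D1 D2 d ∩ {ω | S ω = 1})).indicator 1
        = (X ⁻¹' B ∩ (fun ω => Y2 ω - Y0 ω) ⁻¹' C ∩ evD D1 D2 d).indicator S := by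
    ext ω
    rcases hSv ω with hω | hω <;> simp [← inter_assoc, indicator_apply, hω]
  simp only [observed, factor]
  exact hMAR.2.2 d.2 hd (ind ({d.1} ×ˢ C))
    (measurable_ind ((measurableSet_singleton d.1).prod hC)) ⟨1, abs_ind_le_one _⟩
    (ind B) (measurable_ind hB) ⟨1, abs_ind_le_one B⟩

lemma MAR.integrable_comp [IsFiniteMeasure P] (hMAR : MAR P X D1 D2 S Y0 Y2 q)
    (hX : Measurable X) {b : ℝ} (hb : b ∈ ({0, 1} : Set ℝ)) :
    Integrable (fun ω => q b (X ω)) P := by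
  refine .of_bound ((hMAR.1 b hb).1.comp hX).aestronglyMeasurable 1 ?_
  filter_upwards [hMAR.2.1 b hb] with ω hω
  rw [Real.norm_of_nonneg hω.1.le]
  exact hω.2

lemma MAR.identDistrib [IsFiniteMeasure P] (hMAR : MAR P X D1 D2 S Y0 Y2 q) (hX : Measurable X)
    (hD1 : Measurable D1) (hD2 : Measurable D2) (hS : Measurable S)
    (hSv : ∀ ω, S ω = 0 ∨ S ω = 1) (hY : Measurable fun ω => Y2 ω - Y0 ω)
    (hd : d.2 ∈ ({0, 1} : Set ℝ)) :
    IdentDistrib (fun ω => (X ω, Y2 ω - Y0 ω)) (fun ω => (X ω, Y2 ω - Y0 ω))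
      (P.restrict (evD D1 D2 d ∩ {ω | S ω = 1}))
      ((P.restrict (evD D1 D2 d)).withDensity fun ω => ((q d.2 (X ω)).toNNReal : ℝ≥0∞)) := by
  have hXY : Measurable fun ω => (X ω, Y2 ω - Y0 ω) := hX.prodMk hY
  refine ⟨hXY.aemeasurable, hXY.aemeasurable, Measure.ext_prod fun {B C} hB hC => ?_⟩
  have hT := (hX hB).inter (hY hC)
  rw [Measure.map_apply hXY (hB.prod hC), Measure.map_apply hXY (hB.prod hC), mk_preimage_prod,
    withDensity_apply _ hT, ← ofReal_measureReal,
    hMAR.measureReal_preimage_inter hX hD1 hD2 hS hSv hY hd hB hC]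
  exact ofReal_integral_eq_lintegral_ofReal
    (hMAR.integrable_comp hX hd).integrableOn.integrableOn
    (ae_restrict_of_ae (ae_restrict_of_ae ((hMAR.2.1 _ hd).mono fun _ h => h.1.le)))

lemma IsCondMeanGiven.ae_eq_condExp_of_mar [IsFiniteMeasure P] {mS : 𝓧 → ℝ}
    (hmS : IsCondMeanGiven P X (evD D1 D2 d ∩ {ω | S ω = 1}) (fun ω => Y2 ω - Y0 ω) mS)
    (hMAR : MAR P X D1 D2 S Y0 Y2 q) (hX : Measurable X) (hD1 : Measurable D1)
    (hD2 : Measurable D2) (hS : Measurable S) (hSv : ∀ ω, S ω = 0 ∨ S ω = 1)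
    (hY : Measurable fun ω => Y2 ω - Y0 ω) (hYi : Integrable (fun ω => Y2 ω - Y0 ω) P)
    (hd : d.2 ∈ ({0, 1} : Set ℝ)) :
    (fun ω => mS (X ω)) =ᵐ[P.restrict (evD D1 D2 d)]
      (P.restrict (evD D1 D2 d))[fun ω => Y2 ω - Y0 ω | m𝓧.comap X] := by
  have hq : Measurable[m𝓧.comap X] fun ω => (q d.2 (X ω)).toNNReal :=
    ((hMAR.1 _ hd).1.comp (comap_measurable X)).real_toNNReal
  have h_law := hMAR.identDistrib hX hD1 hD2 hS hSv hY hd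
  have : IsFiniteMeasure
      ((P.restrict (evD D1 D2 d)).withDensity fun ω => ((q d.2 (X ω)).toNNReal : ℝ≥0∞)) :=
    isFiniteMeasure_withDensity_ofReal (hMAR.integrable_comp hX hd).integrableOn.2
  have h_complete := hmS.ae_eq_condExp hX
    ((measurableSet_evD hD1 hD2 d).inter (hS (measurableSet_singleton 1))) hYi.integrableOn
  have h_weighted :=
    comp_ae_eq_condExp_of_identDistrib hX hX h_law hYi.integrableOn hmS.1 h_complete
  have h_drop := condExp_withDensity_ae_eq hX.comap_le hq hYi.integrableOn
    ((h_law.comp measurable_snd).integrable_iff.1 hYi.integrableOn)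
  filter_upwards [(ae_withDensity_iff (hq.mono hX.comap_le le_rfl).coe_nnreal_ennreal).1
    (h_weighted.trans h_drop), ae_restrict_of_ae (hMAR.2.1 _ hd)] with ω hω hqω
  exact hω (by simpa using hqω.1)

lemma DID.condExp_noAnticipation [IsFiniteMeasure P] (hDID : DID P X D1 D2 Y0p Y2p d)
    (hX : Measurable X) (hA : MeasurableSet (evD D1 D2 d)) (hY0d : Integrable (Y0p d) P)
    (hY00 : Integrable (Y0p (0, 0)) P) :
    (P.restrict (evD D1 D2 d))[Y0p d | m𝓧.comap X] =ᵐ[P.restrict (evD D1 D2 d)]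
      (P.restrict (evD D1 D2 d))[Y0p (0, 0) | m𝓧.comap X] := by
  refine condExp_ae_eq_condExp_of_forall_setIntegral_eq hX.comap_le hY0d.integrableOn
    hY00.integrableOn ?_
  rintro _ ⟨B, hB, rfl⟩
  rw [← integral_ind_mul_mul_ind_comp hX hA _ hB, ← integral_ind_mul_mul_ind_comp hX hA _ hB]
  exact hDID.1 (ind B) (measurable_ind hB) ⟨1, abs_ind_le_one B⟩

lemma DID.condExp_parallelTrends [IsFiniteMeasure P] (hDID : DID P X D1 D2 Y0p Y2p d)
    (hX : Measurable X) (hA : MeasurableSet (evD D1 D2 d))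
    (htr : Integrable (fun ω => Y2p (0, 0) ω - Y0p (0, 0) ω) P) :
    (P.restrict (evD D1 D2 d))[fun ω => Y2p (0, 0) ω - Y0p (0, 0) ω | m𝓧.comap X]
      =ᵐ[P.restrict (evD D1 D2 d)] P[fun ω => Y2p (0, 0) ω - Y0p (0, 0) ω | m𝓧.comap X] := by
  obtain ⟨tr, h_univ, h_path⟩ := hDID.2
  exact (h_path.ae_eq_condExp hX hA htr.integrableOn).symm.trans
    (ae_restrict_of_ae (h_univ.ae_eq_condExp_of_univ hX htr))

lemma DID.condExp_eq_effect_add_trend [IsFiniteMeasure P] (hDID : DID P X D1 D2 Y0p Y2p d)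
    (hX : Measurable X) (hA : MeasurableSet (evD D1 D2 d))
    (hY0d : Integrable (Y0p d) P) (hY2d : Integrable (Y2p d) P)
    (hY00 : Integrable (Y0p (0, 0)) P) (hY20 : Integrable (Y2p (0, 0)) P)
    (hcons0 : ∀ ω, Y0 ω = Y0p (D1 ω, D2 ω) ω) (hcons2 : ∀ ω, Y2 ω = Y2p (D1 ω, D2 ω) ω)
    {g : 𝓧 → ℝ}
    (hg : IsCondMeanGiven P X (evD D1 D2 d) (fun ω => Y2p d ω - Y2p (0, 0) ω) g) :
    (P.restrict (evD D1 D2 d))[fun ω => Y2 ω - Y0 ω | m𝓧.comap X]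
      =ᵐ[P.restrict (evD D1 D2 d)] fun ω =>
        g (X ω) + (P[fun ω => Y2p (0, 0) ω - Y0p (0, 0) ω | m𝓧.comap X]) ω := by
  let effect : Ω → ℝ := Y2p d - Y2p (0, 0)
  let trend : Ω → ℝ := Y2p (0, 0) - Y0p (0, 0)
  let anticipation : Ω → ℝ := Y0p (0, 0) - Y0p d
  have h_effect : Integrable effect P := hY2d.sub hY20
  have h_trend : Integrable trend P := hY20.sub hY00
  have h_decomp : (fun ω => Y2 ω - Y0 ω) =ᵐ[P.restrict (evD D1 D2 d)]
      effect + trend + anticipation := by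
    refine ae_restrict_of_forall_mem hA fun ω hω => ?_
    have hDω : (D1 ω, D2 ω) = d := Prod.ext hω.1 hω.2
    simp only [hcons0, hcons2, hDω, effect, trend, anticipation, Pi.add_apply, Pi.sub_apply]
    ring
  filter_upwards [condExp_congr_ae (m := m𝓧.comap X) h_decomp,
    condExp_add (h_effect.add h_trend).integrableOn (hY00.sub hY0d).integrableOn (m𝓧.comap X),
    condExp_add h_effect.integrableOn h_trend.integrableOn (m𝓧.comap X),
    condExp_sub hY00.integrableOn hY0d.integrableOn (m𝓧.comap X),
    hg.ae_eq_condExp hX hA h_effect.integrableOn,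
    hDID.condExp_parallelTrends hX hA h_trend,
    hDID.condExp_noAnticipation hX hA hY0d hY00]
    with ω h_obs h_add h_add' h_ant h_eff h_tr h_no_ant
  simp only [Pi.add_apply, Pi.sub_apply] at h_add h_add' h_ant
  rw [h_obs, h_add, h_add', h_ant, h_eff, h_no_ant, ← h_tr, sub_self, add_zero]
  rfl

lemma IsCondMeanGiven.ae_eq_of_ae_eq_restrict [IsFiniteMeasure P] {A : Set Ω} {p : 𝓧 → ℝ}
    (hp : IsCondMeanGiven P X univ (ind A) p) (hX : Measurable X) (hA : MeasurableSet A)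
    (hpos : ∀ᵐ ω ∂P, 0 < p (X ω)) {f g : Ω → ℝ} (hf : StronglyMeasurable[m𝓧.comap X] f)
    (hg : StronglyMeasurable[m𝓧.comap X] g) (h : f =ᵐ[P.restrict A] g) : f =ᵐ[P] g := by
  refine ae_of_ae_restrict_of_condExp_pos hA ?_ (hf.measurableSet_eq_fun hg) h
  filter_upwards [hpos, hp.ae_eq_condExp_of_univ hX ((integrable_const 1).indicator hA)]
    with ω hω h_eq
  exact h_eq ▸ hω

lemma MAR.completeCase_ae_eq [IsFiniteMeasure P] {mS g p : 𝓧 → ℝ}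
    (hMAR : MAR P X D1 D2 S Y0 Y2 q) (hX : Measurable X) (hD1 : Measurable D1)
    (hD2 : Measurable D2) (hS : Measurable S) (hSv : ∀ ω, S ω = 0 ∨ S ω = 1)
    (hY : Measurable fun ω => Y2 ω - Y0 ω) (hYi : Integrable (fun ω => Y2 ω - Y0 ω) P)
    (hY0p : ∀ e ∈ allPaths, Integrable (Y0p e) P) (hY2p : ∀ e ∈ allPaths, Integrable (Y2p e) P)
    (hcons0 : ∀ ω, Y0 ω = Y0p (D1 ω, D2 ω) ω) (hcons2 : ∀ ω, Y2 ω = Y2p (D1 ω, D2 ω) ω)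
    (hd : d ∈ allPaths) (hDID : DID P X D1 D2 Y0p Y2p d)
    (hp : IsCondMeanGiven P X univ (ind (evD D1 D2 d)) p) (hpos : ∀ᵐ ω ∂P, 0 < p (X ω))
    (hmS : IsCondMeanGiven P X (evD D1 D2 d ∩ {ω | S ω = 1}) (fun ω => Y2 ω - Y0 ω) mS)
    (hg : IsCondMeanGiven P X (evD D1 D2 d) (fun ω => Y2p d ω - Y2p (0, 0) ω) g) :
    (fun ω => mS (X ω)) =ᵐ[P] fun ω =>
      g (X ω) + (P[fun ω => Y2p (0, 0) ω - Y0p (0, 0) ω | m𝓧.comap X]) ω := by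
  have hd2 : d.2 ∈ ({0, 1} : Set ℝ) := by
    rcases hd with rfl | rfl | rfl | rfl <;> simp
  have h00 : ((0, 0) : ℝ × ℝ) ∈ allPaths := by simp [allPaths]
  have hA := measurableSet_evD hD1 hD2 d
  have h_on_path := (hmS.ae_eq_condExp_of_mar hMAR hX hD1 hD2 hS hSv hY hYi hd2).trans
    (hDID.condExp_eq_effect_add_trend hX hA (hY0p d hd) (hY2p d hd) (hY0p _ h00) (hY2p _ h00)
      hcons0 hcons2 hg)
  exact hp.ae_eq_of_ae_eq_restrict hX hA hpos
    (hmS.1.comp (comap_measurable X)).stronglyMeasurable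
    ((hg.1.comp (comap_measurable X)).stronglyMeasurable.add stronglyMeasurable_condExp) h_on_path

end MissingTreatment

/-- Complete-case conditional contrast:
`E[ΔY ∣ D = d, S = 1, X] − E[ΔY ∣ D = d', S = 1, X] = E[Y₂(d) − Y₂(d') ∣ D = d, X]` a.s. -/
theorem statement_16
    [MeasurableSpace Ω] [m𝓧 : MeasurableSpace 𝓧]
    (P : Measure Ω) [IsProbabilityMeasure P]
    (X : Ω → 𝓧) (hX : Measurable X)
    (Y0 Y2 D1 D2 S : Ω → ℝ)
    (hY0 : Measurable Y0) (hY2 : Measurable Y2)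
    (hD1 : Measurable D1) (hD2 : Measurable D2) (hS : Measurable S)
    (hY0i : Integrable Y0 P) (hY2i : Integrable Y2 P)
    (hD1v : ∀ ω, D1 ω = 0 ∨ D1 ω = 1) (hD2v : ∀ ω, D2 ω = 0 ∨ D2 ω = 1)
    (hSv : ∀ ω, S ω = 0 ∨ S ω = 1)
    (Y0p Y2p : ℝ × ℝ → Ω → ℝ)
    (hY0p : ∀ e ∈ allPaths, Measurable (Y0p e) ∧ Integrable (Y0p e) P)
    (hY2p : ∀ e ∈ allPaths, Measurable (Y2p e) ∧ Integrable (Y2p e) P)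
    (hcons0 : ∀ ω, Y0 ω = Y0p (D1 ω, D2 ω) ω)
    (hcons2 : ∀ ω, Y2 ω = Y2p (D1 ω, D2 ω) ω)
    (d : ℝ × ℝ) (hd : d ∈ threePaths)
    (hDIDd : DID P X D1 D2 Y0p Y2p d) (hDIDd' : DID P X D1 D2 Y0p Y2p (0, 0))
    (q : ℝ → 𝓧 → ℝ) (hMAR : MAR P X D1 D2 S Y0 Y2 q)
    (pd pd' : 𝓧 → ℝ)
    (hpd : IsCondMeanGiven P X Set.univ (ind (evD D1 D2 d)) pd)
    (hpd' : IsCondMeanGiven P X Set.univ (ind (evD D1 D2 (0, 0))) pd')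
    (hpdpos : ∀ᵐ ω ∂P, 0 < pd (X ω)) (hpd'pos : ∀ᵐ ω ∂P, 0 < pd' (X ω))
    (hdS1 : 0 < P (evD D1 D2 d ∩ {ω | S ω = 1}))
    (hd'S1 : 0 < P (evD D1 D2 (0, 0) ∩ {ω | S ω = 1}))
    (mS mS' : 𝓧 → ℝ)
    (hmS : IsCondMeanGiven P X (evD D1 D2 d ∩ {ω | S ω = 1}) (fun ω => Y2 ω - Y0 ω) mS)
    (hmS' : IsCondMeanGiven P X (evD D1 D2 (0, 0) ∩ {ω | S ω = 1})
        (fun ω => Y2 ω - Y0 ω) mS')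
    (g : 𝓧 → ℝ)
    (hg : IsCondMeanGiven P X (evD D1 D2 d) (fun ω => Y2p d ω - Y2p (0, 0) ω) g) :
    ∀ᵐ ω ∂P, mS (X ω) - mS' (X ω) = g (X ω) := by
  have h_path {e : ℝ × ℝ} {mSe ge pe : 𝓧 → ℝ} :=
    hMAR.completeCase_ae_eq (d := e) (mS := mSe) (g := ge) (p := pe) hX hD1 hD2 hS hSv
      (hY2.sub hY0) (hY2i.sub hY0i) (fun e he => (hY0p e he).2) (fun e he => (hY2p e he).2)
      hcons0 hcons2
  have hd_all : d ∈ allPaths := by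
    rcases hd with rfl | rfl | rfl <;> simp [allPaths]
  have h_zero : IsCondMeanGiven P X (evD D1 D2 (0, 0))
      (fun ω => Y2p (0, 0) ω - Y2p (0, 0) ω) 0 := ⟨measurable_const, by simp⟩
  filter_upwards [h_path hd_all hDIDd hpd hpdpos hmS hg,
    h_path (by simp [allPaths]) hDIDd' hpd' hpd'pos hmS' h_zero] with ω h_treated h_untreated
  simp only [h_treated, h_untreated, Pi.zero_apply]
  ring

end DIDMissing
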